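/- Define a₄, a₆ ∈ ℚ[[q]] by: the q^N-coefficient of a₄ is −5·σ₃(N) for N ≥ 1 and 0 for N = 0, and the q^N-coefficient of a₆ is −(5σ₃(N) + 7σ₅(N))/12 for N ≥ 1 and 0 for N = 0, where σ_j(N) = Σ_{m ∣ N} m^j. Let Δ be the discriminant of the Weierstrass curve with coefficients (a₁, a₂, a₃, a₄, a₆) = (1, 0, 0, a₄, a₆) over ℚ[[q]], i.e. Δ = −b₂²b₈ − 8b₄³ − 27b₆² + 9b₂b₄b₆ with b₂ = 1, b₄ = 2a₄, b₆ = 4a₆, b₈ = a₆ − a₄². Then Δ = q·∏_{n=1}^∞ (1 − qⁿ)^{24}, where the infinite product converges in the q-adic (coefficientwise) topology on ℚ[[q]] (the family n ↦ (1 − qⁿ)^{24} is multipliable there). This is the statement that the discriminant of the Tate curve equals q·∏_{n≥1}(1−qⁿ)^{24}. -/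

import Mathlib

noncomputable section

/-- The coefficient series `a₄(q) = -5·Σ_{n≥1} σ₃(n)qⁿ ∈ ℚ[[q]]`. -/
def tateA4 : PowerSeries ℚ :=
  PowerSeries.mk fun N =>
    if N = 0 then 0 else -5 * ∑ m ∈ N.divisors, (m : ℚ) ^ 3

/-- The coefficient series `a₆(q) = -Σ_{n≥1} ((5σ₃(n) + 7σ₅(n))/12)qⁿ ∈ ℚ[[q]]`. -/
def tateA6 : PowerSeries ℚ :=
  PowerSeries.mk fun N =>
    if N = 0 then 0
    else -(5 * (∑ m ∈ N.divisors, (m : ℚ) ^ 3) +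
            7 * (∑ m ∈ N.divisors, (m : ℚ) ^ 5)) / 12

/-- The Tate curve `y² + xy = x³ + a₄(q)x + a₆(q)` as a Weierstrass curve over `ℚ[[q]]`. -/
def tateCurve : WeierstrassCurve (PowerSeries ℚ) :=
  ⟨1, 0, 0, tateA4, tateA6⟩

/-- The product (coefficientwise) topology on `ℚ[[q]] = ((Unit →₀ ℕ) → ℚ)`. -/
local instance : TopologicalSpace (PowerSeries ℚ) :=
  inferInstanceAs (TopologicalSpace ((Unit →₀ ℕ) → ℚ))

section TateAux

open UpperHalfPlane ModularForm ModularFormClass MatrixGroups EisensteinSeries Filter Topology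

local instance tateT2 : T2Space (PowerSeries ℚ) := PowerSeries.WithPiTopology.instT2Space ℚ
local instance tateTopRing : IsTopologicalRing (PowerSeries ℚ) := PowerSeries.WithPiTopology.instIsTopologicalRing ℚ

lemma mult1 : Multipliable (fun n : ℕ => ((1 : PowerSeries ℚ) - PowerSeries.X ^ (n + 1))) :=
  PowerSeries.WithPiTopology.multipliable_one_sub_X_pow ℚ

def taylor0 (f : ℂ → ℂ) : PowerSeries ℂ :=
  .mk fun m ↦ ((m.factorial : ℂ))⁻¹ * iteratedDeriv m f 0

lemma taylor0_mul {f g : ℂ → ℂ} (hf : AnalyticAt ℂ f 0) (hg : AnalyticAt ℂ g 0) :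
    taylor0 (f * g) = taylor0 f * taylor0 g := by
  ext m
  simp only [taylor0, PowerSeries.coeff_mk, PowerSeries.coeff_mul,
    iteratedDeriv_mul hf.contDiffAt hg.contDiffAt, Finset.mul_sum]
  rw [Finset.Nat.sum_antidiagonal_eq_sum_range_succ_mk]
  refine Finset.sum_congr rfl fun i hi => ?_
  have hi' : i ≤ m := by simpa [Nat.lt_succ_iff] using hi
  have := Nat.choose_mul_factorial_mul_factorial hi'
  have h2 : (m.choose i : ℂ) * i.factorial * (m-i).factorial = m.factorial := by exact_mod_cast this
  have h3 : (m.factorial : ℂ) ≠ 0 := by exact_mod_cast m.factorial_ne_zero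
  have h4 : (i.factorial : ℂ) ≠ 0 := by exact_mod_cast i.factorial_ne_zero
  have h5 : ((m-i).factorial : ℂ) ≠ 0 := by exact_mod_cast (m-i).factorial_ne_zero
  field_simp
  rw [← h2]; ring

lemma taylor0_one : taylor0 1 = 1 := by
  ext m
  rcases m with _ | m
  · simp [taylor0]
  · simp only [taylor0, PowerSeries.coeff_mk, PowerSeries.coeff_one]
    rw [show (1 : ℂ → ℂ) = fun _ => 1 from rfl, iteratedDeriv_const]
    simp

lemma taylor0_pow {f : ℂ → ℂ} (hf : AnalyticAt ℂ f 0) (n : ℕ) :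
    taylor0 (f ^ n) = taylor0 f ^ n := by
  induction n with
  | zero => simpa using taylor0_one
  | succ n ih => rw [pow_succ, pow_succ, taylor0_mul (hf.pow n) hf, ih]

lemma iteratedDeriv_poly (p : Polynomial ℂ) (m : ℕ) :
    iteratedDeriv m (fun x => p.eval x) = fun x => (Polynomial.derivative^[m] p).eval x := by
  induction m with
  | zero => simp
  | succ m ih =>
    rw [iteratedDeriv_succ, ih, Function.iterate_succ_apply']
    ext x; simp

lemma taylor0_poly (p : Polynomial ℂ) : taylor0 (fun x => p.eval x) = (p : PowerSeries ℂ) := by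
  ext m
  simp only [taylor0, PowerSeries.coeff_mk, iteratedDeriv_poly, Polynomial.coeff_coe]
  rw [← Polynomial.coeff_zero_eq_eval_zero, Polynomial.coeff_iterate_derivative]
  have h3 : (m.factorial : ℂ) ≠ 0 := by exact_mod_cast m.factorial_ne_zero
  simp [Nat.descFactorial_self]
  field_simp

lemma tendsto_iter {ι : Type*} {l : Filter ι} [l.NeBot] {F : ι → ℂ → ℂ} {f : ℂ → ℂ} {U : Set ℂ} (hU : IsOpen U)
    (hF : ∀ i, Differentiable ℂ (F i)) (h : TendstoLocallyUniformlyOn F f l U) (m : ℕ) :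
    TendstoLocallyUniformlyOn (fun i => iteratedDeriv m (F i)) (iteratedDeriv m f) l U := by
  induction m with
  | zero => simpa using h
  | succ m ih =>
    simp only [iteratedDeriv_succ]
    refine ih.deriv (.of_forall fun i => ?_) hU
    have : ContDiff ℂ ⊤ (F i) := (hF i).contDiff
    exact ((this.differentiable_iteratedDeriv m (by simp))).differentiableOn

def eulerPoly (s : Finset ℕ) : Polynomial ℚ := ∏ n ∈ s, (1 - Polynomial.X ^ (n + 1))

lemma taylor0_euler : taylor0 (fun q => ∏' n, (1 - q ^ (n + 1))) =
    PowerSeries.map (algebraMap ℚ ℂ) (∏' n : ℕ, ((1 : PowerSeries ℚ) - PowerSeries.X ^ (n + 1))) := by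
  ext m
  rw [taylor0, PowerSeries.coeff_mk]
  have h1 := multipliableLocallyUniformlyOn_one_sub_pow.hasProdLocallyUniformlyOn
  rw [hasProdLocallyUniformlyOn_iff_tendstoLocallyUniformlyOn] at h1
  have h2 := (tendsto_iter Metric.isOpen_ball (fun s => by fun_prop) h1 m).tendsto_at (a := 0) (by simp)
  have h3 := h2.const_mul ((m.factorial : ℂ))⁻¹
  have h4 : Tendsto (fun s : Finset ℕ => ∏ n ∈ s, ((1 : PowerSeries ℚ) - PowerSeries.X ^ (n + 1)))
    atTop (𝓝 (∏' n : ℕ, ((1 : PowerSeries ℚ) - PowerSeries.X ^ (n + 1)))) := mult1.hasProd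
  have h5 := ((PowerSeries.WithPiTopology.continuous_coeff ℚ m).tendsto _).comp h4
  have h6 := ((continuous_algebraMap ℚ ℂ).tendsto _).comp h5
  rw [PowerSeries.coeff_map]
  refine tendsto_nhds_unique (Tendsto.congr (fun s => ?_) h3) h6
  have := congrArg (PowerSeries.coeff m) (taylor0_poly ((eulerPoly s).map (algebraMap ℚ ℂ)))
  simp only [taylor0, PowerSeries.coeff_mk, Polynomial.coeff_coe, Polynomial.coeff_map] at this
  simp only [Function.comp]
  have e1 : ∏ n ∈ s, ((1 : PowerSeries ℚ) - PowerSeries.X ^ (n + 1)) = (eulerPoly s : PowerSeries ℚ) := by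
    rw [← Polynomial.coeToPowerSeries.ringHom_apply, eulerPoly, map_prod]; simp
  rw [e1, Polynomial.coeff_coe, ← this]
  congr 3
  ext x
  simp [eulerPoly, Polynomial.map_prod, Polynomial.eval_prod]

lemma qexp_disc : qExpansion 1 ModularForm.discriminant =
    PowerSeries.map (algebraMap ℚ ℂ)
      (PowerSeries.X * ∏' n : ℕ, ((1 : PowerSeries ℚ) - PowerSeries.X ^ (n + 1)) ^ 24) := by
  have hf : AnalyticAt ℂ (fun q : ℂ => ∏' n, (1 - q ^ (n + 1))) 0 :=
    differentiableOn_tprod_one_sub_pow.analyticAt (Metric.isOpen_ball.mem_nhds (by simp))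
  have e : cuspFunction 1 ModularForm.discriminant =ᶠ[𝓝 0]
      ((fun q : ℂ => q) * (fun q : ℂ => ∏' n, (1 - q ^ (n + 1))) ^ 24) := by
    filter_upwards [Metric.isOpen_ball.mem_nhds (Metric.mem_ball_self (x := (0:ℂ)) one_pos)] with q hq
    rw [discriminant_cuspFunction_eqOn hq]
    simp only [Pi.mul_apply, Pi.pow_apply]
    rw [(multipliable_one_sub_pow (by simpa using hq)).tprod_pow]
  have e2 : qExpansion 1 ModularForm.discriminant = taylor0
      ((fun q : ℂ => q) * (fun q : ℂ => ∏' n, (1 - q ^ (n + 1))) ^ 24) := by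
    ext m
    rw [qExpansion_coeff, taylor0, PowerSeries.coeff_mk, e.iteratedDeriv_eq]
  have e3 : taylor0 (fun q : ℂ => q) = PowerSeries.X := by
    simpa using taylor0_poly Polynomial.X
  rw [e2, taylor0_mul (f := fun q : ℂ => q) analyticAt_id (hf.pow 24), taylor0_pow hf, taylor0_euler, e3, mult1.tprod_pow]
  simp

lemma qexp_E4 : qExpansion 1 E₄ = PowerSeries.map (algebraMap ℚ ℂ) (1 - 48 * tateA4) := by
  ext m
  rw [show (48 : PowerSeries ℚ) = PowerSeries.C 48 from (map_ofNat _ 48).symm]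
  rw [EisensteinSeries.E_qExpansion_coeff _ ⟨2, rfl⟩, PowerSeries.coeff_map, map_sub,
    PowerSeries.coeff_C_mul, PowerSeries.coeff_one, tateA4, PowerSeries.coeff_mk]
  have hb : bernoulli 4 = -1/30 := by rw [bernoulli_eq_bernoulli'_of_ne_one (by norm_num), bernoulli'_four]
  split_ifs with h
  · simp
  · simp [hb, ArithmeticFunction.sigma_apply]; ring

lemma bern6 : bernoulli 6 = 1/42 := by
  simp [bernoulli, bernoulli'_def 6, bernoulli'_def 5, Finset.sum_range_succ, Nat.choose]
  norm_num

lemma qexp_E6 : qExpansion 1 E₆ = PowerSeries.map (algebraMap ℚ ℂ) (1 - 72 * tateA4 + 864 * tateA6) := by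
  ext m
  rw [show (72 : PowerSeries ℚ) = PowerSeries.C 72 from (map_ofNat _ 72).symm,
    show (864 : PowerSeries ℚ) = PowerSeries.C 864 from (map_ofNat _ 864).symm]
  rw [EisensteinSeries.E_qExpansion_coeff _ ⟨3, rfl⟩, PowerSeries.coeff_map, map_add, map_sub,
    PowerSeries.coeff_C_mul, PowerSeries.coeff_C_mul, PowerSeries.coeff_one, tateA4, tateA6,
    PowerSeries.coeff_mk, PowerSeries.coeff_mk]
  split_ifs with h
  · simp
  · simp [bern6, ArithmeticFunction.sigma_apply]; ring

lemma qexp_rel : (1728 : PowerSeries ℂ) * qExpansion 1 ModularForm.discriminant =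
    qExpansion 1 E₄ ^ 3 - qExpansion 1 E₆ ^ 2 := by
  have a4 := ModularFormClass.analyticAt_cuspFunction_zero E₄ one_pos one_mem_strictPeriods_SL
  have a6 := ModularFormClass.analyticAt_cuspFunction_zero E₆ one_pos one_mem_strictPeriods_SL
  have ad := ModularFormClass.analyticAt_cuspFunction_zero CuspForm.discriminant one_pos one_mem_strictPeriods_SL
  have p3 := ModularForm.qExpansion_pow one_pos one_mem_strictPeriods_SL E₄ 3
  have p2 := ModularForm.qExpansion_pow one_pos one_mem_strictPeriods_SL E₆ 2
  have b3 := ModularFormClass.analyticAt_cuspFunction_zero (E₄.pow 3) one_pos one_mem_strictPeriods_SL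
  have b2 := ModularFormClass.analyticAt_cuspFunction_zero (E₆.pow 2) one_pos one_mem_strictPeriods_SL
  have hs := UpperHalfPlane.qExpansion_sub b3 b2
  have hd := UpperHalfPlane.qExpansion_smul ad 1728
  have : (1728 : ℂ) • ⇑CuspForm.discriminant = ⇑(E₄.pow 3) - ⇑(E₆.pow 2) := by
    ext z
    have := discriminant_eq_E₄_cube_sub_E₆_sq z
    simp only [Pi.smul_apply, Pi.sub_apply, CuspForm.coe_discriminant, this, ModularForm.coe_pow, Pi.pow_apply, smul_eq_mul]
    ring
  rw [this, hs] at hd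
  rw [p3, p2, CuspForm.coe_discriminant] at hd
  rw [hd, PowerSeries.smul_eq_C_mul, map_ofNat]

lemma tate_rel : 1728 * tateCurve.Δ =
    (1 - 48 * tateA4) ^ 3 - (1 - 72 * tateA4 + 864 * tateA6) ^ 2 := by
  rw [tateCurve.c_relation]
  simp only [WeierstrassCurve.c₄, WeierstrassCurve.c₆, WeierstrassCurve.b₂, WeierstrassCurve.b₄,
    WeierstrassCurve.b₆, tateCurve]
  generalize tateA4 = a
  generalize tateA6 = b
  ring

end TateAux

local instance tateT2' : T2Space (PowerSeries ℚ) := PowerSeries.WithPiTopology.instT2Space ℚ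

local instance tateTopRing' : IsTopologicalRing (PowerSeries ℚ) :=
  PowerSeries.WithPiTopology.instIsTopologicalRing ℚ

/-- **The discriminant of the Tate curve:** `Δ = q·∏_{n=1}^∞ (1 - qⁿ)^24`, the family
`n ↦ (1 - qⁿ)^24` being multipliable for the coefficientwise topology on `ℚ[[q]]`. -/
theorem tateCurve_discriminant :
    Multipliable (fun n : ℕ => ((1 : PowerSeries ℚ) - PowerSeries.X ^ (n + 1)) ^ 24) ∧
    tateCurve.Δ =
      PowerSeries.X * ∏' n : ℕ, ((1 : PowerSeries ℚ) - PowerSeries.X ^ (n + 1)) ^ 24 := by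
  refine ⟨mult1.pow 24, ?_⟩
  apply PowerSeries.map_injective (algebraMap ℚ ℂ) (algebraMap ℚ ℂ).injective
  rw [← qexp_disc]
  have h0 : (1728 : PowerSeries ℂ) ≠ 0 := by
    rw [← map_ofNat (PowerSeries.C (R := ℂ)) 1728, Ne, map_eq_zero_iff _ PowerSeries.C_injective]
    norm_num
  apply mul_left_cancel₀ h0
  rw [qexp_rel, qexp_E4, qexp_E6]
  have := congrArg (PowerSeries.map (algebraMap ℚ ℂ)) tate_rel
  rw [map_mul, map_ofNat, map_sub, map_pow, map_pow] at this
  exact this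

end
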